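/- arXiv:2102.05342 — 3 statements merged into one kernel-verified Lean document; each statement's English description precedes it below -/
import Mathlib

section
/- Under the standing hypotheses on a and b, fix (x, y) ∈ ℝ² with (x, y) ≠ (0,0) and define ρ : ℝ → ℝ by ρ(t) = (x cos t + y sin t)²/a(t)² + (−x sin t + y cos t)²/b(t)². Then ρ is strictly decreasing on ℝ, ρ(t) → +∞ as t → −∞, and ρ(t) → 0 as t → +∞. In particular there exists a unique t̄ ∈ ℝ with ρ(t̄) = 1. -/
open Filter Real

/-!
Write `u = x cos t + y sin t` and `v = -x sin t + y cos t` for the coordinates of `(x, y)` in the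
frame rotated by `t`, so that `u' = v`, `v' = -u` and `u² + v² = x² + y² > 0`. Differentiating
`ρ = u² / a² + v² / b²` gives
`ρ' = -2 (a' b³ u² + (a² - b²) a b u v + b' a³ v²) / (a³ b³)`.
The quadratic form in `(u, v)` has discriminant `a² b² ((a² - b²)² - 4 a b a' b')`, which is negative
by hypothesis, so the form is positive definite (`quadForm_pos`) and `ρ' < 0`.
Since `b ≤ a`, one has `(x² + y²) / a² ≤ ρ ≤ (x² + y²) / b²`, which gives both limits; the unique
solution of `ρ = 1` then comes from the intermediate value theorem and injectivity.
-/

/-- A binary quadratic form with positive leading coefficient and negative discriminant is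
positive definite. -/
lemma quadForm_pos {P Q R u v : ℝ} (hP : 0 < P) (hdisc : R ^ 2 < 4 * P * Q)
    (huv : 0 < u ^ 2 + v ^ 2) : 0 < P * u ^ 2 + R * (u * v) + Q * v ^ 2 := by
  -- Completing the square.
  have key : 4 * P * (P * u ^ 2 + R * (u * v) + Q * v ^ 2)
      = (2 * P * u + R * v) ^ 2 + (4 * P * Q - R ^ 2) * v ^ 2 := by ring
  rcases eq_or_ne v 0 with rfl | hv
  · have hu : 0 < u ^ 2 := by simpa using huv
    have := mul_pos hP hu
    simpa using this
  · have h1 : 0 < (4 * P * Q - R ^ 2) * v ^ 2 := mul_pos (by linarith) (by positivity)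
    have h2 : 0 < 4 * P * (P * u ^ 2 + R * (u * v) + Q * v ^ 2) := by
      rw [key]; positivity
    exact pos_of_mul_pos_right h2 (by positivity)

theorem rho_strictly_decreasing
    (a b : ℝ → ℝ)
    (ha : ContDiff ℝ 1 a) (hb : ContDiff ℝ 1 b)
    (hbpos : ∀ t, 0 < b t) (hba : ∀ t, b t ≤ a t)
    (ha' : ∀ t, 0 < deriv a t) (hb' : ∀ t, 0 < deriv b t)
    (haBot : Tendsto a atBot (nhds 0)) (hbBot : Tendsto b atBot (nhds 0))
    (haTop : Tendsto a atTop atTop) (hbTop : Tendsto b atTop atTop)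
    (hfol : ∀ t, (a t ^ 2 - b t ^ 2) ^ 2 < 4 * a t * b t * deriv a t * deriv b t)
    (x y : ℝ) (hxy : (x, y) ≠ (0, 0))
    (ρ : ℝ → ℝ)
    (hρ : ∀ t, ρ t = (x * Real.cos t + y * Real.sin t) ^ 2 / a t ^ 2
        + (-x * Real.sin t + y * Real.cos t) ^ 2 / b t ^ 2) :
    StrictAnti ρ ∧ Tendsto ρ atBot atTop ∧ Tendsto ρ atTop (nhds 0) ∧
      ∃! tbar : ℝ, ρ tbar = 1 := by
  have hapos : ∀ t, 0 < a t := fun t => (hbpos t).trans_le (hba t)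
  have hr : 0 < x ^ 2 + y ^ 2 := by
    rcases eq_or_ne x 0 with rfl | hx
    · have hy : y ≠ 0 := fun h => hxy (by rw [h])
      positivity
    · positivity
  have huv : ∀ t, (x * cos t + y * sin t) ^ 2 + (-x * sin t + y * cos t) ^ 2
      = x ^ 2 + y ^ 2 := fun t => by
    linear_combination (x ^ 2 + y ^ 2) * sin_sq_add_cos_sq t
  have hderiv : ∀ t, ∃ d, HasDerivAt ρ d t ∧ d < 0 := by
    intro t
    have hA : HasDerivAt a (deriv a t) t :=
      (ha.differentiable one_ne_zero t).hasDerivAt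
    have hB : HasDerivAt b (deriv b t) t :=
      (hb.differentiable one_ne_zero t).hasDerivAt
    have hu : HasDerivAt (fun t => x * cos t + y * sin t) (-x * sin t + y * cos t) t := by
      refine (((hasDerivAt_cos t).const_mul x).add
        ((hasDerivAt_sin t).const_mul y)).congr_deriv ?_
      ring
    have hv : HasDerivAt (fun t => -x * sin t + y * cos t) (-(x * cos t + y * sin t)) t := by
      refine (((hasDerivAt_sin t).const_mul (-x)).add
        ((hasDerivAt_cos t).const_mul y)).congr_deriv ?_
      ring
    have hat := hapos t
    have hbt := hbpos t
    have hD := ((hu.pow 2).div (hA.pow 2) (pow_ne_zero 2 hat.ne')).add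
      ((hv.pow 2).div (hB.pow 2) (pow_ne_zero 2 hbt.ne'))
    refine ⟨_, hD.congr_of_eventuallyEq (Eventually.of_forall fun s => hρ s), ?_⟩
    have hE := quadForm_pos (P := deriv a t * b t ^ 3) (Q := deriv b t * a t ^ 3)
      (R := (a t ^ 2 - b t ^ 2) * (a t * b t)) (mul_pos (ha' t) (by positivity))
      (by
        have := mul_lt_mul_of_pos_right (hfol t) (show 0 < (a t * b t) ^ 2 by positivity)
        linarith)
      ((huv t).symm ▸ hr)
    have hneg := div_neg_of_neg_of_pos (mul_neg_of_neg_of_pos (by norm_num : (-2 : ℝ) < 0) hE)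
      (show 0 < a t ^ 3 * b t ^ 3 by positivity)
    refine lt_of_eq_of_lt ?_ hneg
    simp only [Pi.pow_apply]
    field_simp
    ring
  have hanti : StrictAnti ρ := by
    refine strictAnti_of_deriv_neg fun t => ?_
    obtain ⟨d, hd, hneg⟩ := hderiv t
    rwa [hd.deriv]
  have hcont : Continuous ρ := continuous_iff_continuousAt.2 fun t => by
    obtain ⟨d, hd, -⟩ := hderiv t
    exact hd.continuousAt
  have hlow : ∀ t, (x ^ 2 + y ^ 2) * (a t ^ 2)⁻¹ ≤ ρ t := by
    intro t
    have hbt := hbpos t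
    have hle := hba t
    rw [hρ, ← huv t, ← div_eq_mul_inv, add_div]
    gcongr
  have hupp : ∀ t, ρ t ≤ (x ^ 2 + y ^ 2) * (b t ^ 2)⁻¹ := by
    intro t
    have hbt := hbpos t
    have hle := hba t
    rw [hρ, ← huv t, ← div_eq_mul_inv, add_div]
    gcongr
  have hnonneg : ∀ t, 0 ≤ ρ t := fun t => by rw [hρ]; positivity
  have hbot : Tendsto ρ atBot atTop := by
    have h0 : Tendsto (fun t => a t ^ 2) atBot (nhdsWithin 0 (Set.Ioi 0)) :=
      tendsto_nhdsWithin_iff.2 ⟨by simpa using haBot.pow 2,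
        Eventually.of_forall fun t => pow_pos (hapos t) 2⟩
    exact tendsto_atTop_mono hlow (h0.inv_tendsto_nhdsGT_zero.const_mul_atTop hr)
  have htop : Tendsto ρ atTop (nhds 0) := by
    have h0 : Tendsto (fun t => b t ^ 2) atTop atTop :=
      (tendsto_pow_atTop two_ne_zero).comp hbTop
    have h1 := h0.inv_tendsto_atTop.const_mul (x ^ 2 + y ^ 2)
    rw [mul_zero] at h1
    exact squeeze_zero hnonneg hupp h1
  refine ⟨hanti, hbot, htop, ?_⟩
  obtain ⟨s, hs⟩ := (hbot.eventually_ge_atTop 1).exists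
  obtain ⟨r, hr1⟩ := (htop.eventually_le_const one_pos).exists
  obtain ⟨c, hc⟩ := mem_range_of_exists_le_of_exists_ge hcont ⟨r, hr1⟩ ⟨s, hs⟩
  exact ⟨c, hc, fun z hz => hanti.injective (hz.trans hc.symm)⟩
end

section
/- Let τ ∈ (0, 1/10) and let f : ℝ² → ℝ satisfy f(0,0) = 0 and f(M(t,θ)) = exp(t/τ) for all (t,θ) ∈ ℝ². Then for every p ∈ ℝ², (1/√2)^{1/τ} · ‖p‖^{1/τ} ≤ f(p) ≤ ‖p‖^{1/τ}. Moreover, for all (t, θ) ∈ ℝ², e^t ≤ ‖M(t,θ)‖ ≤ √2 · e^t. -/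
/-!
The matrix form `M t θ = e^t • R_t (√2 cos θ, sin θ)`, with `R_t` the rotation by `t`, gives
`‖M t θ‖² = e^{2t} (2 cos² θ + sin² θ) = e^{2t} (1 + cos² θ)`, hence `e^t ≤ ‖M t θ‖ ≤ √2 e^t`.
Raising this to the power `1/τ` gives the bounds on `f` at every point of the range of `M`, because
`f (M t θ) = (e^t)^{1/τ}`.  The remaining point is that `M` reaches every nonzero `p`: writing
`R_{-t} p = (u, v)`, one needs a `t` with `u²/2 + v² = e^{2t}`, and since the left side lies
between `‖p‖²/2` and `‖p‖²`, the intermediate value theorem on `[log (‖p‖/√2), log ‖p‖]`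
provides it (`exists_polar_params`).
-/

open Real

lemma exists_cos_sin_eq {a b : ℝ} (h : a ^ 2 + b ^ 2 = 1) : ∃ θ : ℝ, cos θ = a ∧ sin θ = b := by
  have hn : ‖(⟨a, b⟩ : ℂ)‖ = 1 := by
    rw [Complex.norm_def, Complex.normSq_mk, ← sq, ← sq, h, sqrt_one]
  have h0 : (⟨a, b⟩ : ℂ) ≠ 0 := by
    intro h0
    simp [h0] at hn
  refine ⟨Complex.arg ⟨a, b⟩, ?_, ?_⟩
  · rw [Complex.cos_arg h0, hn, div_one]
  · rw [Complex.sin_arg, hn, div_one]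

/-- Surjectivity of `M` onto the punctured plane, in coordinates. -/
lemma exists_polar_params {x y : ℝ} (h : 0 < x ^ 2 + y ^ 2) :
    ∃ t θ : ℝ, exp t * (√2 * cos t * cos θ - sin t * sin θ) = x ∧
      exp t * (√2 * sin t * cos θ + cos t * sin θ) = y := by
  have h2 : (√2) ^ 2 = 2 := sq_sqrt (by norm_num)
  set R := x ^ 2 + y ^ 2 with hR
  let g : ℝ → ℝ := fun t =>
    (x * cos t + y * sin t) ^ 2 / 2 + (-x * sin t + y * cos t) ^ 2 - exp (2 * t)
  have hrot (t : ℝ) : (x * cos t + y * sin t) ^ 2 + (-x * sin t + y * cos t) ^ 2 = R := by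
    linear_combination (x ^ 2 + y ^ 2) * sin_sq_add_cos_sq t
  have hexp {s : ℝ} (hs : 0 < s) : exp (2 * (log s / 2)) = s := by
    rw [mul_div_cancel₀ _ (two_ne_zero), exp_log hs]
  have hle : log (R / 2) / 2 ≤ log R / 2 := by
    have := log_le_log (half_pos h) (half_le_self h.le)
    linarith
  obtain ⟨t, -, ht⟩ : (0 : ℝ) ∈ g '' Set.Icc (log (R / 2) / 2) (log R / 2) := by
    refine intermediate_value_Icc' hle (by fun_prop) ⟨?_, ?_⟩
    · simp only [g, hexp h]
      nlinarith [hrot (log R / 2), sq_nonneg (x * cos (log R / 2) + y * sin (log R / 2))]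
    · simp only [g, hexp (half_pos h)]
      nlinarith [hrot (log (R / 2) / 2),
        sq_nonneg (-x * sin (log (R / 2) / 2) + y * cos (log (R / 2) / 2))]
  have hE : exp (2 * t) = exp t ^ 2 := by rw [← exp_nat_mul]; norm_num
  have hpos := exp_pos t
  have hs : (0 : ℝ) < √2 := by positivity
  simp only [g, hE] at ht
  obtain ⟨θ, hc, hsn⟩ : ∃ θ : ℝ, cos θ = (x * cos t + y * sin t) / (√2 * exp t) ∧
      sin θ = (-x * sin t + y * cos t) / exp t := by
    apply exists_cos_sin_eq
    rw [div_pow, div_pow, mul_pow, h2]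
    field_simp
    linarith
  have hc' : exp t * √2 * cos θ = x * cos t + y * sin t := by rw [hc]; field_simp
  have hs' : exp t * sin θ = -x * sin t + y * cos t := by rw [hsn]; field_simp
  refine ⟨t, θ, ?_, ?_⟩
  · linear_combination cos t * hc' - sin t * hs' + x * sin_sq_add_cos_sq t
  · linear_combination sin t * hc' + cos t * hs' + y * sin_sq_add_cos_sq t

theorem constructed_function_growth_bounds (τ : ℝ) (hτ : τ ∈ Set.Ioo (0:ℝ) (1/10))
    (M : ℝ → ℝ → EuclideanSpace ℝ (Fin 2))
    (hM : ∀ t θ, M t θ = (WithLp.equiv 2 (Fin 2 → ℝ)).symm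
      ![Real.exp t * (Real.sqrt 2 * Real.cos t * Real.cos θ - Real.sin t * Real.sin θ),
        Real.exp t * (Real.sqrt 2 * Real.sin t * Real.cos θ + Real.cos t * Real.sin θ)])
    (f : EuclideanSpace ℝ (Fin 2) → ℝ)
    (hf0 : f 0 = 0)
    (hfM : ∀ t θ, f (M t θ) = Real.exp (t / τ)) :
    (∀ p : EuclideanSpace ℝ (Fin 2),
      (1 / Real.sqrt 2) ^ (1 / τ) * ‖p‖ ^ (1 / τ) ≤ f p ∧ f p ≤ ‖p‖ ^ (1 / τ)) ∧
    (∀ t θ : ℝ, Real.exp t ≤ ‖M t θ‖ ∧ ‖M t θ‖ ≤ Real.sqrt 2 * Real.exp t) := by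
  have hτ0 : 0 < 1 / τ := one_div_pos.mpr hτ.1
  have h2 : (√2) ^ 2 = 2 := sq_sqrt (by norm_num)
  have hs : (0 : ℝ) < √2 := by positivity
  have hnorm (t θ : ℝ) : ‖M t θ‖ ^ 2 = exp t ^ 2 * (1 + cos θ ^ 2) := by
    rw [EuclideanSpace.norm_sq_eq, Fin.sum_univ_two, hM]
    simp only [WithLp.equiv_symm_apply, Matrix.cons_val_zero, Matrix.cons_val_one,
      Real.norm_eq_abs, sq_abs]
    linear_combination exp t ^ 2 * ((2 * cos θ ^ 2 + sin θ ^ 2) * sin_sq_add_cos_sq t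
      + sin_sq_add_cos_sq θ + cos θ ^ 2 * (sin t ^ 2 + cos t ^ 2) * h2)
  have hbd (t θ : ℝ) : exp t ≤ ‖M t θ‖ ∧ ‖M t θ‖ ≤ √2 * exp t := by
    constructor
    · refine le_of_sq_le_sq ?_ (norm_nonneg _)
      rw [hnorm]
      nlinarith [mul_nonneg (sq_nonneg (exp t)) (sq_nonneg (cos θ))]
    · refine le_of_sq_le_sq ?_ (by positivity)
      rw [hnorm, mul_pow, h2]
      nlinarith [mul_nonneg (sq_nonneg (exp t)) (sub_nonneg.mpr (cos_sq_le_one θ))]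
  refine ⟨fun p => ?_, hbd⟩
  by_cases hp : p = 0
  · subst hp
    simp [hf0, zero_rpow (inv_ne_zero hτ.1.ne')]
  have hpos : 0 < p 0 ^ 2 + p 1 ^ 2 := by
    have h := EuclideanSpace.norm_sq_eq p
    simp only [Fin.sum_univ_two, Real.norm_eq_abs, sq_abs] at h
    rw [← h]
    have := norm_pos_iff.mpr hp
    positivity
  obtain ⟨t, θ, hx, hy⟩ := exists_polar_params hpos
  obtain rfl : M t θ = p := by
    rw [hM, hx, hy]
    ext i
    fin_cases i <;> simp
  have hf : f (M t θ) = exp t ^ (1 / τ) := by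
    rw [hfM, ← exp_mul, mul_one_div]
  obtain ⟨hlo, hhi⟩ := hbd t θ
  rw [hf, ← mul_rpow (by positivity) (norm_nonneg _)]
  refine ⟨rpow_le_rpow (by positivity) ?_ hτ0.le, rpow_le_rpow (exp_pos t).le hlo hτ0.le⟩
  rw [one_div_mul_eq_div, div_le_iff₀' hs]
  exact hhi
end

section
/- Let τ ∈ (0, 1/10) and let f : ℝ² → ℝ satisfy f(0,0) = 0 and f(M(t,θ)) = exp(t/τ) for all (t,θ) ∈ ℝ². Then f is real analytic on ℝ² \ {(0,0)}, and f is continuously differentiable on all of ℝ² with ∇f(0,0) = (0,0). -/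
/-!
Write `spiral (t, θ) = e^t R_t (√2 cos θ, sin θ)`, where `R_t` is the rotation by `t`, so that
`f (spiral (t, θ)) = e^{t/τ}`.

The map `spiral` is real analytic with Jacobian determinant `e^{2t} (√2 + sin θ cos θ) > 0`
(`cramer_fst`, `cramer_snd`, `half_le_jacobian`), and it hits every nonzero point
(`spiral_surjective`). By the analytic inverse function theorem, near each nonzero point `f` is
`e^{t/τ}` with `t` the first coordinate of an analytic local inverse of `spiral`, hence `f` is
analytic there (`analyticAt_spiral`). Injectivity of `spiral` is not needed, since the value of
`f` is prescribed at every `(t, θ)`.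

At the origin, `e^t ≤ ‖spiral (t, θ)‖` gives `|f p| ≤ ‖p‖ ^ (1/τ)`, so `f` has derivative `0`
there because `1/τ > 1` (`hasFDerivAt_origin`). Differentiating `f (spiral (t, θ)) = e^{t/τ}`
and applying Cramer's rule gives `‖Df p‖ ≤ (12/τ) ‖p‖ ^ (1/τ - 1)`
(`norm_fderiv_spiral_le`), which tends to `0` at the origin; thus `Df` is continuous.
-/

open Real
open scoped ContDiff Topology

/-- The map `M` as a function of the pair `q = (t, θ)`. -/
noncomputable def spiral (q : ℝ × ℝ) : EuclideanSpace ℝ (Fin 2) :=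
  !₂[exp q.1 * (√2 * cos q.1 * cos q.2 - sin q.1 * sin q.2),
    exp q.1 * (√2 * sin q.1 * cos q.2 + cos q.1 * sin q.2)]

lemma spiral_contDiff : ContDiff ℝ ω spiral := by
  rw [contDiff_euclidean]
  intro i
  fin_cases i <;> simp only [spiral, Fin.zero_eta, Fin.mk_one, PiLp.toLp_apply,
    Matrix.cons_val_zero, Matrix.cons_val_one] <;> fun_prop

lemma spiral_hasFDerivAt (q : ℝ × ℝ) : HasFDerivAt spiral (fderiv ℝ spiral q) q :=
  (spiral_contDiff.differentiable (by simp) q).hasFDerivAt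

lemma fderiv_spiral_apply_zero (q w : ℝ × ℝ) :
    fderiv ℝ spiral q w 0 =
      w.1 * (exp q.1 * (√2 * cos q.1 * cos q.2 - sin q.1 * sin q.2
        - √2 * sin q.1 * cos q.2 - cos q.1 * sin q.2))
      + w.2 * (exp q.1 * (-√2 * cos q.1 * sin q.2 - sin q.1 * cos q.2)) := by
  have h1 : HasFDerivAt (fun q : ℝ × ℝ => q.1) (ContinuousLinearMap.fst ℝ ℝ ℝ) q :=
    hasFDerivAt_fst
  have h2 : HasFDerivAt (fun q : ℝ × ℝ => q.2) (ContinuousLinearMap.snd ℝ ℝ ℝ) q :=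
    hasFDerivAt_snd
  have h := h1.exp.mul (((h1.cos.const_mul √2).mul h2.cos).sub (h1.sin.mul h2.sin))
  have h' := (EuclideanSpace.proj (𝕜 := ℝ) (ι := Fin 2) 0).hasFDerivAt.comp q
    (spiral_hasFDerivAt q)
  have key := DFunLike.congr_fun (h'.unique h) w
  simp at key
  rw [key]
  ring

lemma fderiv_spiral_apply_one (q w : ℝ × ℝ) :
    fderiv ℝ spiral q w 1 =
      w.1 * (exp q.1 * (√2 * sin q.1 * cos q.2 + cos q.1 * sin q.2
        + √2 * cos q.1 * cos q.2 - sin q.1 * sin q.2))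
      + w.2 * (exp q.1 * (-√2 * sin q.1 * sin q.2 + cos q.1 * cos q.2)) := by
  have h1 : HasFDerivAt (fun q : ℝ × ℝ => q.1) (ContinuousLinearMap.fst ℝ ℝ ℝ) q :=
    hasFDerivAt_fst
  have h2 : HasFDerivAt (fun q : ℝ × ℝ => q.2) (ContinuousLinearMap.snd ℝ ℝ ℝ) q :=
    hasFDerivAt_snd
  have h := h1.exp.mul (((h1.sin.const_mul √2).mul h2.cos).add (h1.cos.mul h2.sin))
  have h' := (EuclideanSpace.proj (𝕜 := ℝ) (ι := Fin 2) 1).hasFDerivAt.comp q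
    (spiral_hasFDerivAt q)
  have key := DFunLike.congr_fun (h'.unique h) w
  simp at key
  rw [key]
  ring

/-- Cramer's rule for the first component of `w`, with one factor `exp t` cancelled from both
sides: the Jacobian determinant of `spiral` is `exp (2 * t) * (√2 + sin θ * cos θ)`. -/
lemma cramer_fst (q w : ℝ × ℝ) :
    w.1 * (exp q.1 * (√2 + sin q.2 * cos q.2)) =
      fderiv ℝ spiral q w 0 * (-√2 * sin q.1 * sin q.2 + cos q.1 * cos q.2)
      - fderiv ℝ spiral q w 1 * (-√2 * cos q.1 * sin q.2 - sin q.1 * cos q.2) := by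
  rw [fderiv_spiral_apply_zero, fderiv_spiral_apply_one]
  have hs : √2 ^ 2 = 2 := Real.sq_sqrt (by norm_num)
  have h1 := Real.sin_sq_add_cos_sq q.1
  have h2 := Real.sin_sq_add_cos_sq q.2
  generalize √2 = r at *
  generalize sin q.1 = a at *
  generalize cos q.1 = b at *
  generalize sin q.2 = c at *
  generalize cos q.2 = d at *
  generalize exp q.1 = e at *
  grind

/-- Cramer's rule for the second component of `w`, again with one factor `exp t` cancelled. -/
lemma cramer_snd (q w : ℝ × ℝ) :
    w.2 * (exp q.1 * (√2 + sin q.2 * cos q.2)) =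
      fderiv ℝ spiral q w 1 * (√2 * cos q.1 * cos q.2 - sin q.1 * sin q.2
        - √2 * sin q.1 * cos q.2 - cos q.1 * sin q.2)
      - fderiv ℝ spiral q w 0 * (√2 * sin q.1 * cos q.2 + cos q.1 * sin q.2
        + √2 * cos q.1 * cos q.2 - sin q.1 * sin q.2) := by
  rw [fderiv_spiral_apply_zero, fderiv_spiral_apply_one]
  have hs : √2 ^ 2 = 2 := Real.sq_sqrt (by norm_num)
  have h1 := Real.sin_sq_add_cos_sq q.1
  have h2 := Real.sin_sq_add_cos_sq q.2
  generalize √2 = r at *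
  generalize sin q.1 = a at *
  generalize cos q.1 = b at *
  generalize sin q.2 = c at *
  generalize cos q.2 = d at *
  generalize exp q.1 = e at *
  grind

lemma half_le_jacobian (θ : ℝ) : 1 / 2 ≤ √2 + sin θ * cos θ := by
  have h2 := Real.sin_sq_add_cos_sq θ
  have : 1 ≤ √2 := Real.one_le_sqrt.2 (by norm_num)
  nlinarith [sq_nonneg (sin θ + cos θ)]

lemma fderiv_spiral_injective (q : ℝ × ℝ) : Function.Injective (fderiv ℝ spiral q) := by
  rw [injective_iff_map_eq_zero]
  intro w hw
  have hJ := half_le_jacobian q.2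
  have hpos : exp q.1 * (√2 + sin q.2 * cos q.2) ≠ 0 :=
    (mul_pos (exp_pos _) (by linarith)).ne'
  have e1 := cramer_fst q w
  have e2 := cramer_snd q w
  simp only [hw, PiLp.zero_apply, zero_mul, sub_zero, mul_eq_zero, hpos, or_false] at e1 e2
  exact Prod.ext e1 e2

/-- The derivative of `spiral` as a linear isomorphism. -/
noncomputable def spiralDeriv (q : ℝ × ℝ) : (ℝ × ℝ) ≃L[ℝ] EuclideanSpace ℝ (Fin 2) :=
  ((fderiv ℝ spiral q).toLinearMap.linearEquivOfInjective (fderiv_spiral_injective q)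
    (by simp)).toContinuousLinearEquiv

lemma coe_spiralDeriv (q : ℝ × ℝ) :
    (spiralDeriv q : (ℝ × ℝ) →L[ℝ] EuclideanSpace ℝ (Fin 2)) = fderiv ℝ spiral q :=
  ContinuousLinearMap.ext fun _ => rfl

lemma norm_spiral_sq (q : ℝ × ℝ) : ‖spiral q‖ ^ 2 = exp q.1 ^ 2 * (1 + cos q.2 ^ 2) := by
  rw [EuclideanSpace.norm_sq_eq]
  simp only [spiral, Fin.sum_univ_two, Real.norm_eq_abs, sq_abs, PiLp.toLp_apply,
    Matrix.cons_val_zero, Matrix.cons_val_one]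
  have hs : √2 ^ 2 = 2 := Real.sq_sqrt (by norm_num)
  have h1 := Real.sin_sq_add_cos_sq q.1
  have h2 := Real.sin_sq_add_cos_sq q.2
  generalize √2 = r at *
  generalize sin q.1 = a at *
  generalize cos q.1 = b at *
  generalize sin q.2 = c at *
  generalize cos q.2 = d at *
  generalize exp q.1 = e at *
  grind

lemma exp_le_norm_spiral (q : ℝ × ℝ) : exp q.1 ≤ ‖spiral q‖ := by
  have h := norm_spiral_sq q
  refine le_of_sq_le_sq ?_ (norm_nonneg _)
  rw [h]
  nlinarith [sq_nonneg (exp q.1 * cos q.2)]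

lemma exists_angle {a b : ℝ} (h : a ^ 2 + b ^ 2 = 1) : ∃ θ, cos θ = a ∧ sin θ = b := by
  have hz : ‖(⟨a, b⟩ : ℂ)‖ = 1 := by
    rw [← sq_eq_sq₀ (norm_nonneg _) zero_le_one, Complex.sq_norm, Complex.normSq_mk]
    linarith
  refine ⟨Complex.arg ⟨a, b⟩, ?_, ?_⟩
  · rw [Complex.cos_arg (by rw [← norm_ne_zero_iff, hz]; exact one_ne_zero), hz]; simp
  · rw [Complex.sin_arg, hz]; simp

/-- Every nonzero point lies on one of the rotated and scaled ellipses: in the frame rotated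
by `t`, the form `u ^ 2 / 2 + v ^ 2` lies between half of `‖p‖ ^ 2` and `‖p‖ ^ 2`, so it meets
`exp (2 * t)` for some `t` by the intermediate value theorem. -/
lemma spiral_surjective {p : EuclideanSpace ℝ (Fin 2)} (hp : p ≠ 0) : ∃ q, spiral q = p := by
  set x := p 0 with hx
  set y := p 1 with hy
  have hpos : 0 < x ^ 2 + y ^ 2 := by
    have h := EuclideanSpace.norm_sq_eq p
    simp only [Fin.sum_univ_two, Real.norm_eq_abs, sq_abs] at h
    rw [← h]
    exact pow_pos (norm_pos_iff.2 hp) 2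
  set Q : ℝ → ℝ := fun t =>
    exp (2 * t) - ((x * cos t + y * sin t) ^ 2 / 2 + (-x * sin t + y * cos t) ^ 2) with hQ
  have hQc : Continuous Q := by fun_prop
  have hrot (t : ℝ) : (x * cos t + y * sin t) ^ 2 + (-x * sin t + y * cos t) ^ 2
      = x ^ 2 + y ^ 2 := by
    linear_combination (x ^ 2 + y ^ 2) * Real.sin_sq_add_cos_sq t
  have hlow : Q (log ((x ^ 2 + y ^ 2) / 2) / 2) ≤ 0 := by
    simp only [hQ]
    rw [mul_div_cancel₀ _ two_ne_zero, exp_log (by positivity)]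
    have := hrot (log ((x ^ 2 + y ^ 2) / 2) / 2)
    nlinarith [sq_nonneg (-x * sin (log ((x ^ 2 + y ^ 2) / 2) / 2)
      + y * cos (log ((x ^ 2 + y ^ 2) / 2) / 2))]
  have hhigh : 0 ≤ Q (log (x ^ 2 + y ^ 2) / 2) := by
    simp only [hQ]
    rw [mul_div_cancel₀ _ two_ne_zero, exp_log hpos]
    have := hrot (log (x ^ 2 + y ^ 2) / 2)
    nlinarith [sq_nonneg (x * cos (log (x ^ 2 + y ^ 2) / 2)
      + y * sin (log (x ^ 2 + y ^ 2) / 2))]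
  obtain ⟨t, ht⟩ := mem_range_of_exists_le_of_exists_ge hQc ⟨_, hlow⟩ ⟨_, hhigh⟩
  have he : exp (2 * t) = exp t ^ 2 := by rw [two_mul, exp_add, sq]
  have hs : √2 ^ 2 = 2 := Real.sq_sqrt (by norm_num)
  have he0 : exp t ≠ 0 := exp_ne_zero t
  have hs0 : √2 ≠ 0 := by positivity
  -- The rescaled coordinates of `p` in the rotated frame lie on the unit circle.
  obtain ⟨θ, hc, hsn⟩ := exists_angle (a := (x * cos t + y * sin t) / (√2 * exp t))
    (b := (-x * sin t + y * cos t) / exp t) (by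
      simp only [hQ, he] at ht
      rw [div_pow, div_pow, mul_pow, hs]
      field_simp
      linarith)
  refine ⟨(t, θ), ?_⟩
  have h1 := Real.sin_sq_add_cos_sq t
  ext i
  fin_cases i
  · simp only [spiral, hc, hsn, Fin.zero_eta, PiLp.toLp_apply, Matrix.cons_val_zero, ← hx]
    field_simp
    linear_combination x * h1
  · simp only [spiral, hc, hsn, Fin.mk_one, PiLp.toLp_apply, Matrix.cons_val_one, ← hy]
    field_simp
    simp
    linear_combination y * h1

lemma tendsto_norm_rpow {τ : ℝ} (hτ : 0 < τ) (hτ1 : τ < 1) :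
    Filter.Tendsto (fun h : EuclideanSpace ℝ (Fin 2) => ‖h‖ ^ (1 / τ - 1)) (𝓝 0) (𝓝 0) := by
  have hpos : 0 < 1 / τ - 1 := by rw [sub_pos, lt_div_iff₀ hτ]; linarith
  have hc : Continuous fun h : EuclideanSpace ℝ (Fin 2) => ‖h‖ ^ (1 / τ - 1) :=
    continuous_norm.rpow_const fun _ => Or.inr hpos.le
  have := hc.tendsto 0
  rwa [norm_zero, Real.zero_rpow hpos.ne'] at this

section
variable {τ : ℝ} {f : EuclideanSpace ℝ (Fin 2) → ℝ}

lemma analyticAt_spiral (hf : ∀ q, f (spiral q) = exp (q.1 / τ)) (q : ℝ × ℝ) :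
    AnalyticAt ℝ f (spiral q) := by
  have hF : HasFDerivAt spiral
      (spiralDeriv q : (ℝ × ℝ) →L[ℝ] EuclideanSpace ℝ (Fin 2)) q := by
    rw [coe_spiralDeriv]
    exact spiral_hasFDerivAt q
  have hC : ContDiffAt ℝ ω spiral q := spiral_contDiff.contDiffAt
  have hinv := hC.to_localInverse hF (by simp)
  have hev := (hC.hasStrictFDerivAt' hF (by simp)).eventually_right_inverse
  have hcomp : ContDiffAt ℝ ω (fun p => exp ((hC.localInverse hF (by simp) p).1 / τ))
      (spiral q) := (hinv.fst.div_const τ).exp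
  refine (hcomp.congr_of_eventuallyEq ?_).analyticAt
  filter_upwards [hev] with p hp
  conv_lhs => rw [← hp, hf]
  rfl

/-- The chain rule for `f (spiral (t, θ)) = exp (t / τ)`. -/
lemma fderiv_apply_fderiv_spiral (hf : ∀ q, f (spiral q) = exp (q.1 / τ)) (q w : ℝ × ℝ) :
    fderiv ℝ f (spiral q) (fderiv ℝ spiral q w) = exp (q.1 / τ) * (w.1 / τ) := by
  have h1 := (analyticAt_spiral hf q).differentiableAt.hasFDerivAt.comp q (spiral_hasFDerivAt q)
  have h2 : HasFDerivAt (fun q : ℝ × ℝ => exp (q.1 / τ))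
      (exp (q.1 / τ) • (τ⁻¹ • ContinuousLinearMap.fst ℝ ℝ ℝ)) q := by
    have : HasFDerivAt (fun q : ℝ × ℝ => q.1) (ContinuousLinearMap.fst ℝ ℝ ℝ) q :=
      hasFDerivAt_fst
    simpa only [div_eq_mul_inv] using (this.mul_const τ⁻¹).exp
  have h3 : f ∘ spiral = fun q : ℝ × ℝ => exp (q.1 / τ) := funext hf
  rw [h3] at h1
  have := DFunLike.congr_fun (h1.unique h2) w
  simp at this
  rw [this]
  ring

/-- The operator norm of `Df` at `spiral q`. If `v` is the image of `w` under the derivative of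
`spiral`, then `Df v = exp (t / τ) * w.1 / τ`, and `cramer_fst` bounds `|w.1|` by
`12 * exp (-t) * ‖v‖`. -/
lemma norm_fderiv_spiral_le (hτ : 0 < τ) (hf : ∀ q, f (spiral q) = exp (q.1 / τ)) (q : ℝ × ℝ) :
    ‖fderiv ℝ f (spiral q)‖ ≤ 12 / τ * (exp q.1) ^ (1 / τ - 1) := by
  refine ContinuousLinearMap.opNorm_le_bound _ (by positivity) fun v => ?_
  obtain ⟨w, rfl⟩ := (spiralDeriv q).surjective v
  change ‖fderiv ℝ f (spiral q) (fderiv ℝ spiral q w)‖ ≤ _ * ‖fderiv ℝ spiral q w‖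
  rw [fderiv_apply_fderiv_spiral hf]
  have hw : |w.1| * exp q.1 ≤ 12 * ‖fderiv ℝ spiral q w‖ := by
    have hc := cramer_fst q w
    have h0 := PiLp.norm_apply_le (fderiv ℝ spiral q w) 0
    have h1 := PiLp.norm_apply_le (fderiv ℝ spiral q w) 1
    rw [Real.norm_eq_abs] at h0 h1
    have hJ := half_le_jacobian q.2
    have hs : √2 ≤ 2 := by rw [Real.sqrt_le_left (by norm_num)]; norm_num
    have hprod (a b : ℝ) (ha : |a| ≤ 1) (hb : |b| ≤ 1) : |a * b| ≤ 1 := by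
      rw [abs_mul]; exact mul_le_one₀ ha (abs_nonneg _) hb
    have hA : |-√2 * sin q.1 * sin q.2 + cos q.1 * cos q.2| ≤ 3 := by
      have := abs_le.1 (hprod _ _ (abs_sin_le_one q.1) (abs_sin_le_one q.2))
      have := abs_le.1 (hprod _ _ (abs_cos_le_one q.1) (abs_cos_le_one q.2))
      rw [abs_le]; constructor <;> nlinarith [Real.sqrt_nonneg 2]
    have hB : |-√2 * cos q.1 * sin q.2 - sin q.1 * cos q.2| ≤ 3 := by
      have := abs_le.1 (hprod _ _ (abs_cos_le_one q.1) (abs_sin_le_one q.2))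
      have := abs_le.1 (hprod _ _ (abs_sin_le_one q.1) (abs_cos_le_one q.2))
      rw [abs_le]; constructor <;> nlinarith [Real.sqrt_nonneg 2]
    have hle : |w.1| * (exp q.1 * (√2 + sin q.2 * cos q.2)) ≤ 6 * ‖fderiv ℝ spiral q w‖ := by
      have hpos : 0 < exp q.1 * (√2 + sin q.2 * cos q.2) :=
        mul_pos (exp_pos _) (by linarith)
      rw [← abs_of_pos hpos, ← abs_mul, hc]
      refine (abs_sub _ _).trans ?_
      rw [abs_mul, abs_mul]
      have := mul_le_mul h0 hA (abs_nonneg _) (norm_nonneg _)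
      have := mul_le_mul h1 hB (abs_nonneg _) (norm_nonneg _)
      linarith
    have := mul_le_mul_of_nonneg_left hJ (mul_nonneg (abs_nonneg w.1) (exp_pos q.1).le)
    linarith
  have he : exp (q.1 / τ) = exp q.1 ^ (1 / τ - 1) * exp q.1 := by
    rw [← exp_mul, ← exp_add]; congr 1; ring
  rw [Real.norm_eq_abs, abs_mul, abs_of_pos (exp_pos _), abs_div, abs_of_pos hτ, he]
  calc exp q.1 ^ (1 / τ - 1) * exp q.1 * (|w.1| / τ)
      = exp q.1 ^ (1 / τ - 1) / τ * (|w.1| * exp q.1) := by ring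
    _ ≤ exp q.1 ^ (1 / τ - 1) / τ * (12 * ‖fderiv ℝ spiral q w‖) := by gcongr
    _ = _ := by ring

lemma hasFDerivAt_origin (hτ : 0 < τ) (hτ1 : τ < 1) (hf0 : f 0 = 0)
    (hf : ∀ q, f (spiral q) = exp (q.1 / τ)) :
    HasFDerivAt f (0 : EuclideanSpace ℝ (Fin 2) →L[ℝ] ℝ) 0 := by
  have h1τ : 1 < 1 / τ := by rw [lt_div_iff₀ hτ]; linarith
  rw [hasFDerivAt_iff_isLittleO_nhds_zero]
  have hbig : (fun h : EuclideanSpace ℝ (Fin 2) => f h) =O[𝓝 0] fun h => ‖h‖ ^ (1 / τ) := by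
    refine Asymptotics.IsBigO.of_bound 1 (.of_forall fun p => ?_)
    rcases eq_or_ne p 0 with rfl | hp
    · simp only [hf0, norm_zero]; positivity
    · obtain ⟨q, rfl⟩ := spiral_surjective hp
      rw [hf, one_mul, Real.norm_of_nonneg (exp_pos _).le,
        Real.norm_of_nonneg (by positivity), div_eq_mul_one_div, exp_mul]
      exact Real.rpow_le_rpow (exp_pos _).le (exp_le_norm_spiral q) (by positivity)
  have hlit : (fun h : EuclideanSpace ℝ (Fin 2) => ‖h‖ ^ (1 / τ)) =o[𝓝 0] fun h => h := by
    rw [← Asymptotics.isLittleO_norm_right]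
    have ht := tendsto_norm_rpow hτ hτ1
    have := ((Asymptotics.isLittleO_one_iff ℝ).2 ht).mul_isBigO
      (Asymptotics.isBigO_refl (fun h : EuclideanSpace ℝ (Fin 2) => ‖h‖) (𝓝 0))
    refine this.congr (fun h => ?_) fun h => one_mul _
    rcases eq_or_ne h 0 with rfl | hh
    · simp [Real.zero_rpow (by positivity : (τ⁻¹ : ℝ) ≠ 0)]
    · rw [← Real.rpow_add_one (norm_ne_zero_iff.2 hh)]; congr 1; ring
  simpa [hf0] using hbig.trans_isLittleO hlit

lemma contDiff_one (hτ : 0 < τ) (hτ1 : τ < 1) (hf0 : f 0 = 0)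
    (hf : ∀ q, f (spiral q) = exp (q.1 / τ)) : ContDiff ℝ 1 f := by
  have h1τ : 1 < 1 / τ := by rw [lt_div_iff₀ hτ]; linarith
  have hz := hasFDerivAt_origin hτ hτ1 hf0 hf
  rw [contDiff_one_iff_fderiv]
  constructor
  · intro p
    rcases eq_or_ne p 0 with rfl | hp
    · exact hz.differentiableAt
    · obtain ⟨q, rfl⟩ := spiral_surjective hp
      exact (analyticAt_spiral hf q).differentiableAt
  · rw [continuous_iff_continuousAt]
    intro p
    rcases eq_or_ne p 0 with rfl | hp
    · rw [ContinuousAt, hz.fderiv]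
      have ht := (tendsto_norm_rpow hτ hτ1).const_mul (12 / τ)
      rw [mul_zero] at ht
      refine squeeze_zero_norm (fun p => ?_) ht
      rcases eq_or_ne p 0 with rfl | hp
      · rw [hz.fderiv, norm_zero]; positivity
      · obtain ⟨q, rfl⟩ := spiral_surjective hp
        refine (norm_fderiv_spiral_le hτ hf q).trans ?_
        gcongr
        · exact exp_le_norm_spiral q
    · obtain ⟨q, rfl⟩ := spiral_surjective hp
      exact (analyticAt_spiral hf q).fderiv.continuousAt

end

theorem constructed_function_analytic_and_C1 (τ : ℝ) (hτ : τ ∈ Set.Ioo (0:ℝ) (1/10))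
    (M : ℝ → ℝ → EuclideanSpace ℝ (Fin 2))
    (hM : ∀ t θ, M t θ = (WithLp.equiv 2 (Fin 2 → ℝ)).symm
      ![Real.exp t * (Real.sqrt 2 * Real.cos t * Real.cos θ - Real.sin t * Real.sin θ),
        Real.exp t * (Real.sqrt 2 * Real.sin t * Real.cos θ + Real.cos t * Real.sin θ)])
    (f : EuclideanSpace ℝ (Fin 2) → ℝ)
    (hf0 : f 0 = 0)
    (hfM : ∀ t θ, f (M t θ) = Real.exp (t / τ)) :
    AnalyticOnNhd ℝ f {p : EuclideanSpace ℝ (Fin 2) | p ≠ 0} ∧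
    ContDiff ℝ 1 f ∧
    gradient f 0 = 0 := by
  have hf (q : ℝ × ℝ) : f (spiral q) = exp (q.1 / τ) := by
    rw [← hfM q.1 q.2, hM]
    rfl
  have hτ1 : τ < 1 := hτ.2.trans (by norm_num)
  refine ⟨fun p hp => ?_, contDiff_one hτ.1 hτ1 hf0 hf, ?_⟩
  · obtain ⟨q, rfl⟩ := spiral_surjective hp
    exact analyticAt_spiral hf q
  · rw [gradient, (hasFDerivAt_origin hτ.1 hτ1 hf0 hf).fderiv, map_zero]
end
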